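/- arXiv:2102.02400 — 2 statements merged into one kernel-verified Lean document; each statement's English description precedes it below -/
import Mathlib

section
/- Let C ≥ 2 and let v ∈ ℝ^C satisfy ∑_{i=1}^C v_i ≥ √(C−1) · ‖v‖₂. Then v_k ≥ 0 for every k ∈ {1, …, C}. Equivalently, the cone R = {v ∈ ℝ^C : ∑_{i=1}^C v_i ≥ √(C−1) · ‖v‖₂} is contained in the nonnegative orthant of ℝ^C. -/
open Matrix BigOperators

/-- Euclidean norm of a vector in `ℝ^C`. -/
noncomputable def euclNorm {C : ℕ} (v : Fin C → ℝ) : ℝ :=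
  Real.sqrt (∑ i, v i ^ 2)

/-- The conical hull of the columns of a matrix `M`. -/
def coneOf {C m : ℕ} (M : Matrix (Fin C) (Fin m) ℝ) : Set (Fin C → ℝ) :=
  {v | ∃ α : Fin m → ℝ, (∀ j, 0 ≤ α j) ∧ v = M.mulVec α}

/-- The second-order cone `R = {v : ∑ i, v i ≥ √(C-1) ‖v‖₂}`. -/
noncomputable def Rcone (C : ℕ) : Set (Fin C → ℝ) :=
  {v | Real.sqrt ((C : ℝ) - 1) * euclNorm v ≤ ∑ i, v i}

/-- `Q` is a permutation matrix. -/
def IsPermMatrix {C : ℕ} (Q : Matrix (Fin C) (Fin C) ℝ) : Prop :=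
  ∃ σ : Equiv.Perm (Fin C), ∀ i j, Q i j = if i = σ j then 1 else 0

/-- `H` is sufficiently scattered. -/
noncomputable def SuffScattered {C m : ℕ} (H : Matrix (Fin C) (Fin m) ℝ) : Prop :=
  Rcone C ⊆ coneOf H ∧
    ∀ Q : Matrix (Fin C) (Fin C) ℝ, Qᵀ * Q = 1 → ¬ IsPermMatrix Q →
      ¬ (coneOf H ⊆ coneOf Q)

/-- `T` is column stochastic. -/
def ColStochastic {C : ℕ} (T : Matrix (Fin C) (Fin C) ℝ) : Prop :=
  (∀ i j, 0 ≤ T i j) ∧ ∀ j, ∑ i, T i j = 1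

/-- `T` is diagonally dominant in the label-noise sense: `T_ii > T_ji` for `j ≠ i`. -/
def DiagDominant {C : ℕ} (T : Matrix (Fin C) (Fin C) ℝ) : Prop :=
  ∀ i j, j ≠ i → T j i < T i i

/-- The dual cone of a set `S ⊆ ℝ^C`. -/
def dualCone {C : ℕ} (S : Set (Fin C → ℝ)) : Set (Fin C → ℝ) :=
  {y | ∀ x ∈ S, 0 ≤ ∑ i, y i * x i}

/-!
Let `S = ∑ i, v i`. Cauchy–Schwarz on the `C - 1` coordinates other than `v k` gives
`(S - v k) ^ 2 ≤ (C - 1) * (‖v‖ ^ 2 - v k ^ 2)`. On the cone `(C - 1) * ‖v‖ ^ 2 ≤ S ^ 2` and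
`0 ≤ S`, so `0 ≤ S ^ 2 - (S - v k) ^ 2 = v k * (2 * S - v k)`, which rules out `v k < 0`.
-/

section OrderedRing

variable {ι R : Type*} [CommRing R] [LinearOrder R] [IsStrictOrderedRing R]
  {s : Finset ι} {k : ι}

theorem sq_sum_sub_le_card_sub_one_mul_sum_sq_sub (v : ι → R) (hk : k ∈ s) :
    (∑ i ∈ s, v i - v k) ^ 2 ≤ ((s.card : R) - 1) * (∑ i ∈ s, v i ^ 2 - v k ^ 2) := by
  classical
  rw [← Finset.sum_erase_eq_sub hk, ← Finset.sum_erase_eq_sub (f := fun i => v i ^ 2) hk,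
    ← Finset.cast_card_erase_of_mem hk]
  exact sq_sum_le_card_mul_sum_sq

theorem nonneg_of_card_sub_one_mul_sum_sq_le_sq_sum {v : ι → R} (hsum : 0 ≤ ∑ i ∈ s, v i)
    (hsq : ((s.card : R) - 1) * ∑ i ∈ s, v i ^ 2 ≤ (∑ i ∈ s, v i) ^ 2) (hk : k ∈ s) :
    0 ≤ v k := by
  have hcard : (0 : R) ≤ (s.card : R) - 1 :=
    sub_nonneg.mpr (Nat.one_le_cast.mpr (Finset.card_pos.mpr ⟨k, hk⟩))
  have hprod : 0 ≤ v k * (2 * ∑ i ∈ s, v i - v k) := by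
    calc
      0 ≤ ((s.card : R) - 1) * v k ^ 2 := mul_nonneg hcard (sq_nonneg _)
      _ ≤ (∑ i ∈ s, v i) ^ 2 - (∑ i ∈ s, v i - v k) ^ 2 := by
        linarith [sq_sum_sub_le_card_sub_one_mul_sum_sq_sub v hk]
      _ = v k * (2 * ∑ i ∈ s, v i - v k) := by ring
  by_contra! hneg
  exact hprod.not_gt (mul_neg_of_neg_of_pos hneg (by linarith))

end OrderedRing

theorem mem_Rcone_iff {C : ℕ} {v : Fin C → ℝ} :
    v ∈ Rcone C ↔ 0 ≤ ∑ i, v i ∧ ((C : ℝ) - 1) * ∑ i, v i ^ 2 ≤ (∑ i, v i) ^ 2 := by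
  rw [Rcone, Set.mem_ofPred_eq, euclNorm,
    ← Real.sqrt_mul' _ (Finset.sum_nonneg fun i _ => sq_nonneg (v i)), Real.sqrt_le_iff]

/-- The cone `R` is contained in the nonnegative orthant. -/
theorem Rcone_subset_nonneg_orthant
    {C : ℕ} (hC : 2 ≤ C) (v : Fin C → ℝ) (hv : v ∈ Rcone C) :
    ∀ k, 0 ≤ v k := by
  intro k
  obtain ⟨hsum, hsq⟩ := mem_Rcone_iff.mp hv
  exact nonneg_of_card_sub_one_mul_sum_sq_le_sq_sum hsum
    (by rwa [Finset.card_fin]) (Finset.mem_univ k)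
end

section
/- Let C ≥ 2 and let A be an invertible real C×C matrix such that R ⊆ cone(A^{-⊤}), where R = {v ∈ ℝ^C : ∑_{i=1}^C v_i ≥ √(C−1) · ‖v‖₂} and cone(A^{-⊤}) is the conical hull of the columns of the inverse transpose of A. Then every column of A satisfies ‖A_{:,i}‖₂ ≤ ∑_{j=1}^C A_{ji}. -/
open Matrix BigOperators

/-!
Duality of cones reverses the inclusion `R ⊆ cone(A⁻ᵀ)`, so each column of `A`, which lies in
`cone A = dual (cone(A⁻ᵀ))`, lies in the dual of `R`. In Euclidean terms `R` is a circular cone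
around the all-ones vector `𝟙`; its dual is the circular cone with the same axis and complementary
half-angle. Writing the half-angle as `cos θ = a / ‖u‖` for an axis `u`, complementary angles
correspond to `a ^ 2 + b ^ 2 = ‖u‖ ^ 2`; here `u = 𝟙`, `a = √(C - 1)` and `b = 1`.
-/

section CircularCone

open scoped RealInnerProductSpace

variable {E : Type*} [NormedAddCommGroup E] [InnerProductSpace ℝ E] {u x y : E} {a b : ℝ}

/-- The circular cone with axis `u` and half-angle `arccos (a / ‖u‖)`. Neither the axis nor the
aperture is normalized, which keeps divisions out of the duality formula `dual_circularCone`. -/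
def circularCone (u : E) (a : ℝ) : Set E :=
  {v | a * ‖v‖ ≤ ⟪u, v⟫}

theorem inner_sq_le_norm_sq_mul_norm_sq (x y : E) : ⟪x, y⟫ ^ 2 ≤ ‖x‖ ^ 2 * ‖y‖ ^ 2 := by
  simpa only [sq, real_inner_self_eq_norm_mul_norm] using real_inner_mul_inner_self_le x y

/-- The component of `x` orthogonal to `u`, multiplied by `‖u‖ ^ 2` to avoid a division. -/
def scaledRejection (u x : E) : E :=
  ‖u‖ ^ 2 • x - ⟪u, x⟫ • u

theorem inner_left_scaledRejection (u x : E) : ⟪u, scaledRejection u x⟫ = 0 := by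
  rw [scaledRejection, inner_sub_right, real_inner_smul_right, real_inner_smul_right,
    real_inner_self_eq_norm_sq]
  ring

theorem inner_scaledRejection_left (u x y : E) :
    ⟪scaledRejection u x, y⟫ = ‖u‖ ^ 2 * ⟪x, y⟫ - ⟪u, x⟫ * ⟪u, y⟫ := by
  rw [scaledRejection, inner_sub_left, real_inner_smul_left, real_inner_smul_left]

theorem inner_scaledRejection_scaledRejection (u x y : E) :
    ⟪scaledRejection u x, scaledRejection u y⟫ =
      ‖u‖ ^ 2 * (‖u‖ ^ 2 * ⟪x, y⟫ - ⟪u, x⟫ * ⟪u, y⟫) := by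
  rw [inner_scaledRejection_left, inner_left_scaledRejection, mul_zero, sub_zero,
    real_inner_comm, inner_scaledRejection_left, real_inner_comm x y, mul_comm ⟪u, y⟫]

theorem norm_scaledRejection_sq (u x : E) :
    ‖scaledRejection u x‖ ^ 2 = ‖u‖ ^ 2 * (‖u‖ ^ 2 * ‖x‖ ^ 2 - ⟪u, x⟫ ^ 2) := by
  rw [← real_inner_self_eq_norm_sq, inner_scaledRejection_scaledRejection,
    real_inner_self_eq_norm_sq, sq ⟪u, x⟫]

theorem norm_sq_mul_inner_sub_sq_le (u x y : E) :
    (‖u‖ ^ 2 * ⟪x, y⟫ - ⟪u, x⟫ * ⟪u, y⟫) ^ 2 ≤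
      (‖u‖ ^ 2 * ‖x‖ ^ 2 - ⟪u, x⟫ ^ 2) * (‖u‖ ^ 2 * ‖y‖ ^ 2 - ⟪u, y⟫ ^ 2) := by
  rcases eq_or_ne u 0 with rfl | hu
  · simp
  have cauchy_schwarz := inner_sq_le_norm_sq_mul_norm_sq
    (scaledRejection u x) (scaledRejection u y)
  rw [inner_scaledRejection_scaledRejection, norm_scaledRejection_sq, norm_scaledRejection_sq,
    mul_pow, mul_mul_mul_comm, ← sq] at cauchy_schwarz
  exact le_of_mul_le_mul_left cauchy_schwarz (by positivity)

theorem inner_nonneg_of_mem_circularCone (hu : u ≠ 0) (ha : 0 ≤ a) (hb : 0 ≤ b)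
    (hab : a ^ 2 + b ^ 2 = ‖u‖ ^ 2) (hx : x ∈ circularCone u a) (hy : y ∈ circularCone u b) :
    0 ≤ ⟪x, y⟫ := by
  have hx₀ : 0 ≤ a * ‖x‖ := by positivity
  have hy₀ : 0 ≤ b * ‖y‖ := by positivity
  have hux : 0 ≤ ⟪u, x⟫ := hx₀.trans hx
  have huy : 0 ≤ ⟪u, y⟫ := hy₀.trans hy
  have hx_sq : (a * ‖x‖) ^ 2 ≤ ⟪u, x⟫ ^ 2 := pow_le_pow_left₀ hx₀ hx 2
  have hy_sq : (b * ‖y‖) ^ 2 ≤ ⟪u, y⟫ ^ 2 := pow_le_pow_left₀ hy₀ hy 2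
  have hx_rej : ‖u‖ ^ 2 * ‖x‖ ^ 2 - ⟪u, x⟫ ^ 2 ≤ (b * ‖x‖) ^ 2 := by rw [← hab]; linarith
  have hy_rej : ‖u‖ ^ 2 * ‖y‖ ^ 2 - ⟪u, y⟫ ^ 2 ≤ (a * ‖y‖) ^ 2 := by rw [← hab]; linarith
  have deviation_sq : (‖u‖ ^ 2 * ⟪x, y⟫ - ⟪u, x⟫ * ⟪u, y⟫) ^ 2 ≤ (⟪u, x⟫ * ⟪u, y⟫) ^ 2 :=
    calc (‖u‖ ^ 2 * ⟪x, y⟫ - ⟪u, x⟫ * ⟪u, y⟫) ^ 2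
        ≤ (‖u‖ ^ 2 * ‖x‖ ^ 2 - ⟪u, x⟫ ^ 2) * (‖u‖ ^ 2 * ‖y‖ ^ 2 - ⟪u, y⟫ ^ 2) :=
          norm_sq_mul_inner_sub_sq_le u x y
      _ ≤ (b * ‖x‖) ^ 2 * (a * ‖y‖) ^ 2 :=
          mul_le_mul hx_rej hy_rej (sub_nonneg.mpr (inner_sq_le_norm_sq_mul_norm_sq u y))
            (sq_nonneg _)
      _ = (a * ‖x‖) ^ 2 * (b * ‖y‖) ^ 2 := by ring
      _ ≤ ⟪u, x⟫ ^ 2 * ⟪u, y⟫ ^ 2 := mul_le_mul hx_sq hy_sq (sq_nonneg _) (sq_nonneg _)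
      _ = (⟪u, x⟫ * ⟪u, y⟫) ^ 2 := by ring
  have deviation_ge : -(⟪u, x⟫ * ⟪u, y⟫) ≤ ‖u‖ ^ 2 * ⟪x, y⟫ - ⟪u, x⟫ * ⟪u, y⟫ :=
    neg_le_of_abs_le (abs_le_of_sq_le_sq deviation_sq (mul_nonneg hux huy))
  exact nonneg_of_mul_nonneg_right (by linarith) (by positivity : 0 < ‖u‖ ^ 2)

theorem axis_mem_circularCone (ha : a ≤ ‖u‖) : u ∈ circularCone u a := by
  rw [circularCone, Set.mem_ofPred_eq, real_inner_self_eq_norm_mul_norm]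
  gcongr

-- For `0 ≤ a, b` this vector lies on the boundary of the cone, in the plane of `u` and `y` and on
-- the side of `u` away from `y`: pairing with it is the tightest dual constraint on `y`.
theorem boundary_mem_circularCone (hab : a ^ 2 + b ^ 2 = ‖u‖ ^ 2) (y : E) :
    (a * √(‖u‖ ^ 2 * ‖y‖ ^ 2 - ⟪u, y⟫ ^ 2)) • u - b • scaledRejection u y ∈
      circularCone u a := by
  set d := √(‖u‖ ^ 2 * ‖y‖ ^ 2 - ⟪u, y⟫ ^ 2)
  set w := scaledRejection u y with hw
  have d_sq : d ^ 2 = ‖u‖ ^ 2 * ‖y‖ ^ 2 - ⟪u, y⟫ ^ 2 :=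
    Real.sq_sqrt (sub_nonneg.mpr (inner_sq_le_norm_sq_mul_norm_sq u y))
  have inner_w : ⟪u, w⟫ = 0 := inner_left_scaledRejection u y
  have norm_w_sq : ‖w‖ ^ 2 = ‖u‖ ^ 2 * d ^ 2 := by rw [hw, norm_scaledRejection_sq, d_sq]
  have norm_sq : ‖(a * d) • u - b • w‖ ^ 2 = (‖u‖ ^ 2 * d) ^ 2 :=
    calc ‖(a * d) • u - b • w‖ ^ 2 = (a * d) ^ 2 * ‖u‖ ^ 2 + b ^ 2 * ‖w‖ ^ 2 := by
          rw [norm_sub_sq_real, real_inner_smul_left, real_inner_smul_right, inner_w,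
            norm_smul, norm_smul, mul_pow, mul_pow, Real.norm_eq_abs, Real.norm_eq_abs,
            sq_abs, sq_abs]
          ring
      _ = (a ^ 2 + b ^ 2) * ‖u‖ ^ 2 * d ^ 2 := by rw [norm_w_sq]; ring
      _ = (‖u‖ ^ 2 * d) ^ 2 := by rw [hab]; ring
  have norm_eq : ‖(a * d) • u - b • w‖ = ‖u‖ ^ 2 * d :=
    (sq_eq_sq₀ (norm_nonneg _) (by positivity)).mp norm_sq
  have inner_eq : ⟪u, (a * d) • u - b • w⟫ = a * (‖u‖ ^ 2 * d) := by
    rw [inner_sub_right, real_inner_smul_right, real_inner_smul_right, inner_w,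
      real_inner_self_eq_norm_sq]
    ring
  rw [circularCone, Set.mem_ofPred_eq, norm_eq, inner_eq]

theorem mem_circularCone_of_forall_inner_nonneg (hu : u ≠ 0) (hb : 0 ≤ b)
    (hab : a ^ 2 + b ^ 2 = ‖u‖ ^ 2) (hy : ∀ x ∈ circularCone u a, 0 ≤ ⟪x, y⟫) :
    y ∈ circularCone u b := by
  set D := ‖u‖ ^ 2 * ‖y‖ ^ 2 - ⟪u, y⟫ ^ 2 with hD
  have D_nonneg : 0 ≤ D := sub_nonneg.mpr (inner_sq_le_norm_sq_mul_norm_sq u y)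
  have a_sq_le : a ^ 2 ≤ ‖u‖ ^ 2 := hab ▸ le_add_of_nonneg_right (sq_nonneg b)
  have inner_nonneg : 0 ≤ ⟪u, y⟫ :=
    hy u (axis_mem_circularCone (le_of_abs_le (abs_le_of_sq_le_sq a_sq_le (norm_nonneg u))))
  have boundary_inner : b * D ≤ a * √D * ⟪u, y⟫ := by
    have h := hy _ (boundary_mem_circularCone hab y)
    rw [← hD, inner_sub_left, real_inner_smul_left, real_inner_smul_left,
      inner_scaledRejection_left, real_inner_self_eq_norm_sq, ← sq, ← hD] at h
    linarith
  have rejection_bound : b ^ 2 * D ≤ a ^ 2 * ⟪u, y⟫ ^ 2 := by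
    rcases D_nonneg.eq_or_lt with hD₀ | hD_pos
    · rw [← hD₀, mul_zero]
      positivity
    refine le_of_mul_le_mul_left ?_ hD_pos
    calc D * (b ^ 2 * D) = (b * D) ^ 2 := by ring
      _ ≤ (a * √D * ⟪u, y⟫) ^ 2 := by gcongr
      _ = √D ^ 2 * (a ^ 2 * ⟪u, y⟫ ^ 2) := by ring
      _ = D * (a ^ 2 * ⟪u, y⟫ ^ 2) := by rw [Real.sq_sqrt D_nonneg]
  refine le_of_abs_le (abs_le_of_sq_le_sq ?_ inner_nonneg)
  refine le_of_mul_le_mul_left ?_ (by positivity : 0 < ‖u‖ ^ 2)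
  calc ‖u‖ ^ 2 * (b * ‖y‖) ^ 2 = b ^ 2 * D + b ^ 2 * ⟪u, y⟫ ^ 2 := by rw [hD]; ring
    _ ≤ a ^ 2 * ⟪u, y⟫ ^ 2 + b ^ 2 * ⟪u, y⟫ ^ 2 := by gcongr
    _ = ‖u‖ ^ 2 * ⟪u, y⟫ ^ 2 := by rw [← hab]; ring

theorem dual_circularCone (hu : u ≠ 0) (ha : 0 ≤ a) (hb : 0 ≤ b)
    (hab : a ^ 2 + b ^ 2 = ‖u‖ ^ 2) :
    (PointedCone.dual (innerₗ E) (circularCone u a) : Set E) = circularCone u b :=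
  Set.Subset.antisymm
    (fun _ hy ↦ mem_circularCone_of_forall_inner_nonneg hu hb hab fun _ hx ↦ hy hx)
    (fun _ hy _ hx ↦ inner_nonneg_of_mem_circularCone hu ha hb hab hx hy)

end CircularCone

section DualCone

variable {C : ℕ}

theorem euclNorm_eq_norm_toLp (v : Fin C → ℝ) : euclNorm v = ‖WithLp.toLp 2 v‖ := by
  simp only [euclNorm, EuclideanSpace.norm_eq, Real.norm_eq_abs, sq_abs]

theorem mem_circularCone_one {a : ℝ} {v : EuclideanSpace ℝ (Fin C)} :
    v ∈ circularCone (WithLp.toLp 2 1) a ↔ a * euclNorm v.ofLp ≤ ∑ i, v i := by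
  simp [circularCone, euclNorm_eq_norm_toLp, PiLp.inner_apply]

theorem mem_dualCone_iff_toLp_mem_dual {S : Set (Fin C → ℝ)} {y : Fin C → ℝ} :
    y ∈ dualCone S ↔
      WithLp.toLp 2 y ∈ PointedCone.dual (innerₗ (EuclideanSpace ℝ (Fin C)))
        (WithLp.ofLp ⁻¹' S) := by
  simp [dualCone, PointedCone.mem_dual, PiLp.inner_apply, (WithLp.toLp_surjective 2).forall]

theorem dualCone_Rcone (hC : 1 ≤ C) : dualCone (Rcone C) = {y | euclNorm y ≤ ∑ i, y i} := by
  have hC_real : (1 : ℝ) ≤ C := by exact_mod_cast hC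
  have norm_one_sq : ‖(WithLp.toLp 2 1 : EuclideanSpace ℝ (Fin C))‖ ^ 2 = C := by
    simp [EuclideanSpace.real_norm_sq_eq]
  have one_ne_zero : (WithLp.toLp 2 1 : EuclideanSpace ℝ (Fin C)) ≠ 0 := by
    rw [← norm_ne_zero_iff, ← pow_ne_zero_iff two_ne_zero, norm_one_sq]
    positivity
  have half_angles : √((C : ℝ) - 1) ^ 2 + 1 ^ 2 =
      ‖(WithLp.toLp 2 1 : EuclideanSpace ℝ (Fin C))‖ ^ 2 := by
    rw [norm_one_sq, Real.sq_sqrt (by linarith)]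
    ring
  have Rcone_eq : WithLp.ofLp ⁻¹' Rcone C = circularCone (WithLp.toLp 2 1) √((C : ℝ) - 1) :=
    Set.ext fun _ ↦ mem_circularCone_one.symm
  ext y
  rw [mem_dualCone_iff_toLp_mem_dual, Rcone_eq, ← SetLike.mem_coe,
    dual_circularCone one_ne_zero (Real.sqrt_nonneg _) zero_le_one half_angles,
    mem_circularCone_one, one_mul, Set.mem_ofPred_eq]

theorem dualCone_anti {S T : Set (Fin C → ℝ)} (h : S ⊆ T) : dualCone T ⊆ dualCone S :=
  fun _ hy x hx ↦ hy x (h hx)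

theorem col_mem_coneOf {m : ℕ} (M : Matrix (Fin C) (Fin m) ℝ) (j : Fin m) : M.col j ∈ coneOf M :=
  ⟨Pi.single j 1, fun k ↦ (Pi.single_nonneg.mpr zero_le_one : (0 : Fin m → ℝ) ≤ Pi.single j 1) k,
    (mulVec_single_one M j).symm⟩

theorem mem_dualCone_coneOf {m : ℕ} {M : Matrix (Fin C) (Fin m) ℝ} {y : Fin C → ℝ} :
    y ∈ dualCone (coneOf M) ↔ 0 ≤ y ᵥ* M := by
  constructor
  · exact fun hy j ↦ hy _ (col_mem_coneOf M j)
  · rintro hy _ ⟨α, hα, rfl⟩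
    change 0 ≤ y ⬝ᵥ M *ᵥ α
    rw [dotProduct_mulVec]
    exact dotProduct_nonneg_of_nonneg hy hα

theorem dualCone_coneOf_inv_transpose {A : Matrix (Fin C) (Fin C) ℝ} (hA : IsUnit A.det) :
    dualCone (coneOf (A⁻¹)ᵀ) = coneOf A := by
  ext y
  rw [mem_dualCone_coneOf, vecMul_transpose]
  constructor
  · exact fun hy ↦ ⟨A⁻¹ *ᵥ y, hy, by rw [mulVec_mulVec, mul_nonsing_inv A hA, one_mulVec]⟩
  · rintro ⟨α, hα, rfl⟩
    rw [mulVec_mulVec, nonsing_inv_mul A hA, one_mulVec]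
    exact hα

end DualCone

/-- If `R ⊆ cone(A^{-⊤})`, then every column of `A` has Euclidean norm at most its
entrywise sum. -/
theorem col_norm_le_sum_of_Rcone_subset_inv_transpose
    {C : ℕ} (hC : 2 ≤ C) (A : Matrix (Fin C) (Fin C) ℝ)
    (hA : IsUnit A.det)
    (hsub : Rcone C ⊆ coneOf (A⁻¹)ᵀ) :
    ∀ i : Fin C, euclNorm (fun j => A j i) ≤ ∑ j, A j i := by
  intro i
  have coneOf_subset : coneOf A ⊆ {y | euclNorm y ≤ ∑ j, y j} := by
    rw [← dualCone_coneOf_inv_transpose hA, ← dualCone_Rcone (one_le_two.trans hC)]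
    exact dualCone_anti hsub
  exact coneOf_subset (col_mem_coneOf A i)
end
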